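/- (Paturi-type bound, easy direction used here) Let q ∈ ℝ[x] with |q(i)| ≤ c₁ for all integers i in [a,b] (a < b integers), and suppose |q(⌊ξ⌋) − q(ξ)| ≥ c₂ > 0 for some real ξ ∈ [a,b]. Then deg q ≥ C·√((ξ−a+1)(b−ξ+1)) for some constant C > 0 depending only on c₁ and c₂. -/

import Mathlib

/-!
Parametrise an interval by the angle `θ` of a semicircle above it, so that `q` becomes the
trigonometric polynomial `F θ = P (cos θ)`, an entire function of exponential type `N = deg q`.
By Bernstein's inequality `F` varies by at most a constant times `N τ max |F|` over an angle `τ`.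
If every angle were within `τ` of the angle of an integer point, with `N τ` small, then `max |F|`
would be at most twice the bound at the integers, and `q` could not jump between `ξ` and an integer
next to it. On an interval of length `L` this works with `τ ~ 1 / √L`, hence `deg q ≳ √L`.

The spacing `1 / √L` occurs only near the endpoints; at angle `θ` it is `1 / (L sin θ)`. To exploit
this, multiply `F` by a power of `sin (p θ) ^ 2`. This weight is `1` at the angle `π / (2 p)`, which
is made the angle of `ξ` by the choice of `L`, and it vanishes at the endpoints to an order
proportional to its degree, so that by the Schwarz lemma the product has its maximum at distance
`≳ 1 / p` from them.
-/

open Polynomial Set Asymptotics Topology Metric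
open scoped Real

section ExponentialType

variable {E : Type*} [NormedAddCommGroup E] [NormedSpace ℂ E] {f : ℂ → E} {N M : ℝ}

/-- `f` is an entire function of exponential type at most `N`, with the explicit bound
`M * exp (N * |Im z|)`; in particular `‖f‖ ≤ M` on the real axis. -/
structure IsExpTypeBounded (f : ℂ → E) (N M : ℝ) : Prop where
  differentiable : Differentiable ℂ f
  norm_le (z : ℂ) : ‖f z‖ ≤ M * Real.exp (N * |z.im|)

namespace IsExpTypeBounded

lemma bound_nonneg (hf : IsExpTypeBounded f N M) : 0 ≤ M := by
  simpa using (norm_nonneg _).trans (hf.norm_le 0)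

lemma norm_le_of_mem_closedBall (hf : IsExpTypeBounded f N M) (hN : 0 ≤ N) {x R : ℝ} {z : ℂ}
    (hz : z ∈ closedBall (x : ℂ) R) : ‖f z‖ ≤ M * Real.exp (N * R) := by
  have him : |z.im| ≤ R := by
    simpa using (Complex.abs_im_le_norm (z - x)).trans (mem_closedBall_iff_norm.1 hz)
  have hM := hf.bound_nonneg
  exact (hf.norm_le z).trans (by gcongr)

/-- Bernstein's inequality, up to the factor `e`. -/
lemma norm_deriv_le (hf : IsExpTypeBounded f N M) (hN : 0 < N) (x : ℝ) :
    ‖deriv f x‖ ≤ Real.exp 1 * N * M := by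
  have hcauchy : ‖deriv f x‖ ≤ M * Real.exp (N * (1 / N)) / (1 / N) :=
    Complex.norm_deriv_le_of_forall_mem_sphere_norm_le (by positivity)
      hf.differentiable.diffContOnCl fun z hz ↦
        hf.norm_le_of_mem_closedBall hN.le (sphere_subset_closedBall hz)
  refine hcauchy.trans_eq ?_
  field_simp

lemma norm_sub_le (hf : IsExpTypeBounded f N M) (hN : 0 < N) (x y : ℝ) :
    ‖f x - f y‖ ≤ Real.exp 1 * N * M * |x - y| := by
  have hreal : ∀ z ∈ Complex.ofRealCLM.range, ‖deriv f z‖ ≤ Real.exp 1 * N * M := by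
    rintro _ ⟨t, rfl⟩
    exact hf.norm_deriv_le hN t
  simpa [← Complex.ofReal_sub] using
    Complex.ofRealCLM.range.convex.norm_image_sub_le_of_norm_deriv_le
      (fun z _ ↦ hf.differentiable z) hreal ⟨y, rfl⟩ ⟨x, rfl⟩

/-- The Schwarz lemma on the disc of radius `k / N` around a zero `c` of order `k`. -/
lemma norm_le_of_isBigO_pow (hf : IsExpTypeBounded f N M) (hN : 0 < N) {k : ℕ} (hk : k ≠ 0)
    {c x : ℝ} (hc : f =O[𝓝 (c : ℂ)] fun z ↦ (z - c) ^ k) (hx : |x - c| < k / N) :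
    ‖f x‖ ≤ M * (Real.exp 1 * N * |x - c| / k) ^ k := by
  have hfc : f c = 0 := hc.eq_zero_imp.self_of_nhds (by simp [hk])
  obtain ⟨n, rfl⟩ := Nat.exists_eq_add_one_of_ne_zero hk
  have hdist : dist (x : ℂ) c = |x - c| := Complex.isometry_ofReal.dist_eq x c
  have hlittle : (f · - f c) =o[𝓝 (c : ℂ)] fun z ↦ ‖z - c‖ ^ n := by
    have hsub : Filter.Tendsto (fun z : ℂ ↦ z - c) (𝓝 c) (𝓝 0) :=
      Continuous.tendsto' (by fun_prop) _ _ (sub_self _)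
    simp only [hfc, sub_zero, ← norm_pow]
    exact (hc.trans_isLittleO ((isLittleO_pow_pow n.lt_succ_self).comp_tendsto hsub)).norm_right
  set R : ℝ := (n + 1 : ℕ) / N with hR
  have hmaps : MapsTo f (ball (c : ℂ) R) (closedBall (f c) (M * Real.exp (N * R))) := fun z hz ↦ by
    simpa only [hfc, mem_closedBall_zero_iff] using
      hf.norm_le_of_mem_closedBall hN.le (ball_subset_closedBall hz)
  have hschwarz := Complex.dist_le_mul_div_pow_of_mapsTo_ball_of_isLittleO
    hf.differentiable.differentiableOn hmaps hlittle (hdist.trans_lt hx)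
  have hexp : Real.exp (N * R) = Real.exp 1 ^ (n + 1) := by
    rw [← Real.exp_nat_mul, hR, mul_div_cancel₀ _ hN.ne', mul_one]
  rw [hfc, dist_zero_right, hdist, hexp, mul_assoc, ← mul_pow] at hschwarz
  convert hschwarz using 3
  rw [hR]
  field_simp

lemma div_le_abs_sub_of_isBigO_pow (hf : IsExpTypeBounded f N M) (hN : 0 < N) (hM : 0 < M) {k : ℕ}
    (hk : k ≠ 0) {c x : ℝ} (hc : f =O[𝓝 (c : ℂ)] fun z ↦ (z - c) ^ k) (hx : M ≤ ‖f x‖) :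
    k / (Real.exp 1 * N) ≤ |x - c| := by
  by_contra! hlt
  have hkpos : (0 : ℝ) < k := by positivity
  have hratio : Real.exp 1 * N * |x - c| / k < 1 := by
    rw [lt_div_iff₀ (by positivity)] at hlt
    rw [div_lt_one hkpos]
    linarith
  have hball : |x - c| < k / N := hlt.trans_le <| by
    gcongr
    exact le_mul_of_one_le_left hN.le (Real.one_le_exp zero_le_one)
  have hlt_one : (Real.exp 1 * N * |x - c| / k) ^ k < 1 := pow_lt_one₀ (by positivity) hratio hk
  have hle := hx.trans (hf.norm_le_of_isBigO_pow hN hk hc hball)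
  exact (mul_lt_of_lt_one_right hM hlt_one).not_ge hle

end IsExpTypeBounded
end ExponentialType

section PolynomialsInCos

-- Since `2 cos z = w + w⁻¹` with `w = exp (i z)`, the function `w ^ N * P (cos z)` is a polynomial
-- in `w`; apply the maximum principle to it on the unit disc.
lemma norm_eval_cos_le_of_im_nonneg {P : ℂ[X]} {N : ℕ} {M : ℝ} (hP : P.natDegree ≤ N)
    (hM : ∀ x : ℝ, ‖P.eval (Complex.cos x)‖ ≤ M) {z : ℂ} (hz : 0 ≤ z.im) :
    ‖P.eval (Complex.cos z)‖ ≤ M * Real.exp (N * z.im) := by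
  set R : ℂ → ℂ := fun w ↦
    ∑ i ∈ Finset.range (N + 1), P.coeff i * ((w ^ 2 + 1) / 2) ^ i * w ^ (N - i) with hR
  have hR_exp (u : ℂ) :
      R (Complex.exp (u * Complex.I)) =
        P.eval (Complex.cos u) * Complex.exp (u * Complex.I) ^ N := by
    set w := Complex.exp (u * Complex.I) with hw
    have hcos : (w ^ 2 + 1) / 2 = Complex.cos u * w := by
      have hinv : Complex.exp (-u * Complex.I) * w = 1 := by simp [hw, ← Complex.exp_add]
      rw [Complex.cos]
      linear_combination -hinv / 2
    rw [eval_eq_sum_range' (Nat.lt_succ_of_le hP), Finset.sum_mul, hR]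
    refine Finset.sum_congr rfl fun i hi ↦ ?_
    rw [hcos, mul_pow, ← pow_mul_pow_sub w (Finset.mem_range_succ_iff.1 hi)]
    ring
  have hR_sphere : ∀ w ∈ frontier (ball (0 : ℂ) 1), ‖R w‖ ≤ M := by
    intro w hw
    rw [frontier_ball _ one_ne_zero, mem_sphere_zero_iff_norm] at hw
    have harg : w = Complex.exp (w.arg * Complex.I) := by
      simpa [hw] using (Complex.norm_mul_exp_arg_mul_I w).symm
    rw [harg, hR_exp]
    simpa using hM w.arg
  have hR_le : ‖R (Complex.exp (z * Complex.I))‖ ≤ M := by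
    refine Complex.norm_le_of_forall_mem_frontier_norm_le isBounded_ball
      (Differentiable.diffContOnCl (by fun_prop)) hR_sphere ?_
    rw [closure_ball _ one_ne_zero, mem_closedBall_zero_iff, Complex.norm_exp]
    simpa using hz
  rw [hR_exp, norm_mul, norm_pow, Complex.norm_exp, ← Real.exp_nat_mul] at hR_le
  rw [← div_le_iff₀ (Real.exp_pos _), div_eq_mul_inv, ← Real.exp_neg]
  simpa using hR_le

lemma isExpTypeBounded_eval_cos {P : ℂ[X]} {N : ℕ} {M : ℝ} (hP : P.natDegree ≤ N)
    (hM : ∀ x : ℝ, ‖P.eval (Complex.cos x)‖ ≤ M) :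
    IsExpTypeBounded (fun z ↦ P.eval (Complex.cos z)) N M where
  differentiable := P.differentiable.comp Complex.differentiable_cos
  norm_le z := by
    rcases le_total 0 z.im with hz | hz
    · simpa only [abs_of_nonneg hz] using norm_eval_cos_le_of_im_nonneg hP hM hz
    · simpa [abs_of_nonpos hz] using
        norm_eval_cos_le_of_im_nonneg hP hM (z := -z) (by simpa using hz)

lemma aeval_ofReal_cos (P : ℝ[X]) (x : ℝ) :
    aeval (Complex.cos x) P = ((P.eval (Real.cos x) : ℝ) : ℂ) := by
  rw [← Complex.ofReal_cos]
  exact aeval_ofReal (K := ℂ) P _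

lemma isExpTypeBounded_aeval_cos {P : ℝ[X]} {N : ℕ} {M : ℝ} (hP : P.natDegree ≤ N)
    (hM : ∀ x : ℝ, |P.eval (Real.cos x)| ≤ M) :
    IsExpTypeBounded (fun z ↦ aeval (Complex.cos z) P) N M := by
  have hbound (x : ℝ) : ‖(P.map (algebraMap ℝ ℂ)).eval (Complex.cos x)‖ ≤ M := by
    simpa [eval_map_algebraMap, aeval_ofReal_cos] using hM x
  simpa only [eval_map_algebraMap] using
    isExpTypeBounded_eval_cos (natDegree_map_le.trans hP) hbound

lemma abs_eval_cos_sub_le {P : ℝ[X]} {N : ℕ} {M : ℝ} (hN : 0 < N) (hP : P.natDegree ≤ N)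
    (hM : ∀ x : ℝ, |P.eval (Real.cos x)| ≤ M) (x y : ℝ) :
    |P.eval (Real.cos x) - P.eval (Real.cos y)| ≤ Real.exp 1 * N * M * |x - y| := by
  simpa only [aeval_ofReal_cos, ← Complex.ofReal_sub, Complex.norm_real, Real.norm_eq_abs] using
    (isExpTypeBounded_aeval_cos hP hM).norm_sub_le (Nat.cast_pos.2 hN) x y

lemma exists_forall_abs_eval_cos_le (P : ℝ[X]) :
    ∃ θ ∈ Icc 0 π, ∀ x : ℝ, |P.eval (Real.cos x)| ≤ |P.eval (Real.cos θ)| := by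
  obtain ⟨t, ht, hmax⟩ := (isCompact_Icc (a := (-1 : ℝ)) (b := 1)).exists_isMaxOn
    (nonempty_Icc.2 (by norm_num)) (f := fun t ↦ |P.eval t|) (by fun_prop)
  refine ⟨Real.arccos t, ⟨Real.arccos_nonneg t, Real.arccos_le_pi t⟩, fun x ↦ ?_⟩
  rw [Real.cos_arccos ht.1 ht.2]
  exact hmax (Real.cos_mem_Icc x)

end PolynomialsInCos

section ChebyshevWeight

/-- The polynomial `w` with `w (cos θ) = sin (p θ) ^ (2 r)`: bounded by `1` on `[-1, 1]`, it equals
`1` at `cos (π / (2 p))` and vanishes to high order at the endpoints. -/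
noncomputable def chebyshevWeight (p r : ℕ) : ℝ[X] := (1 - Chebyshev.T ℝ p ^ 2) ^ r

variable {p r : ℕ}

lemma natDegree_chebyshevWeight_le : (chebyshevWeight p r).natDegree ≤ 2 * p * r := by
  have hbase : (1 - Chebyshev.T ℝ p ^ 2).natDegree ≤ 2 * p := by
    refine (natDegree_sub_le _ _).trans ?_
    simp [natDegree_pow]
  calc (chebyshevWeight p r).natDegree
      ≤ r * (1 - Chebyshev.T ℝ p ^ 2).natDegree := natDegree_pow_le
    _ ≤ r * (2 * p) := by gcongr
    _ = 2 * p * r := mul_comm _ _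

lemma aeval_cos_chebyshevWeight (z : ℂ) :
    aeval (Complex.cos z) (chebyshevWeight p r) = Complex.sin (p * z) ^ (2 * r) := by
  have hT : aeval (Complex.cos z) (Chebyshev.T ℝ p) = Complex.cos (p * z) := by
    simp
  rw [pow_mul, Complex.sin_sq]
  simp only [chebyshevWeight, map_pow, map_sub, map_one, hT]

lemma eval_cos_chebyshevWeight (x : ℝ) :
    (chebyshevWeight p r).eval (Real.cos x) = Real.sin (p * x) ^ (2 * r) := by
  have h := aeval_cos_chebyshevWeight (p := p) (r := r) x
  rw [aeval_ofReal_cos] at h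
  exact_mod_cast h

lemma abs_eval_cos_chebyshevWeight_le_one (x : ℝ) :
    |(chebyshevWeight p r).eval (Real.cos x)| ≤ 1 := by
  rw [eval_cos_chebyshevWeight, abs_pow]
  exact pow_le_one₀ (abs_nonneg _) (Real.abs_sin_le_one _)

lemma eval_cos_chebyshevWeight_eq_one (hp : p ≠ 0) :
    (chebyshevWeight p r).eval (Real.cos (π / (2 * p))) = 1 := by
  have hangle : p * (π / (2 * p)) = π / 2 := by field_simp
  rw [eval_cos_chebyshevWeight, hangle, Real.sin_pi_div_two, one_pow]

lemma aeval_cos_mul_chebyshevWeight_isBigO (Q : ℝ[X]) {c : ℝ} (hc : Real.sin (p * c) = 0) :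
    (fun z ↦ aeval (Complex.cos z) (Q * chebyshevWeight p r)) =O[𝓝 (c : ℂ)]
      fun z ↦ (z - c) ^ (2 * r) := by
  have hsin : (fun z : ℂ ↦ Complex.sin (p * z)) =O[𝓝 (c : ℂ)] fun z ↦ z - c := by
    have hzero : Complex.sin (p * c) = 0 := by exact_mod_cast hc
    have hdiff : DifferentiableAt ℂ (fun z : ℂ ↦ Complex.sin (p * z)) c := by fun_prop
    simpa only [hzero, sub_zero] using hdiff.isBigO_sub
  have hQ : (fun z ↦ aeval (Complex.cos z) Q) =O[𝓝 (c : ℂ)] fun _ ↦ (1 : ℂ) :=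
    ((Q.continuous_aeval.comp Complex.continuous_cos).tendsto _).isBigO_one ℂ
  simpa only [map_mul, aeval_cos_chebyshevWeight, one_mul] using hQ.mul (hsin.pow (2 * r))

-- The product vanishes to order `2 r` at both endpoints, where the Schwarz lemma applies.
lemma mem_Icc_of_abs_eval_mul_chebyshevWeight_eq {Q : ℝ[X]} (hp : p ≠ 0) (hr : r ≠ 0)
    (hdeg : (Q * chebyshevWeight p r).natDegree ≤ 4 * p * r) {M θ : ℝ} (hM : 0 < M)
    (hθ : θ ∈ Icc 0 π)
    (hbound : ∀ x : ℝ, |(Q * chebyshevWeight p r).eval (Real.cos x)| ≤ M)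
    (hmax : |(Q * chebyshevWeight p r).eval (Real.cos θ)| = M) :
    θ ∈ Icc (1 / (2 * Real.exp 1 * p)) (π - 1 / (2 * Real.exp 1 * p)) := by
  have hdist {c : ℝ} (hc : Real.sin (p * c) = 0) : 1 / (2 * Real.exp 1 * p) ≤ |θ - c| := by
    have hfar := (isExpTypeBounded_aeval_cos hdeg hbound).div_le_abs_sub_of_isBigO_pow
      (by positivity) hM (mul_ne_zero two_ne_zero hr) (aeval_cos_mul_chebyshevWeight_isBigO Q hc)
      (x := θ) (by simp only [aeval_ofReal_cos, Complex.norm_real, Real.norm_eq_abs, hmax, le_refl])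
    convert hfar using 1
    push_cast
    field_simp
    norm_num
  constructor
  · simpa [abs_of_nonneg hθ.1] using hdist (c := 0) (by simp)
  · have hpi := hdist (c := π) (Real.sin_nat_mul_pi p)
    rw [abs_of_nonpos (by linarith [hθ.2])] at hpi
    linarith

lemma pi_div_two_mul_le (hp : p ≠ 0) : π / (2 * p) ≤ π / 2 := by
  have hp1 : (1 : ℝ) ≤ p := Nat.one_le_cast.2 (Nat.one_le_iff_ne_zero.2 hp)
  gcongr
  linarith

lemma pi_div_two_mul_mem_Icc (hp : p ≠ 0) :
    π / (2 * p) ∈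
      Icc (1 / (2 * Real.exp 1 * p)) (π - 1 / (2 * Real.exp 1 * p)) := by
  have hexp : 1 ≤ Real.exp 1 := Real.one_le_exp zero_le_one
  have hpi := Real.pi_gt_three
  have hleft : 1 / (2 * Real.exp 1 * p) ≤ π / (2 * p) := by
    gcongr <;> linarith
  have hhalf := pi_div_two_mul_le hp
  constructor <;> linarith

end ChebyshevWeight

section Angles

/-- `θ` is resolved to precision `τ` at length `L`: angles whose points on the arc over an
interval of length `L` lie within unit distance of that of `θ` are within `τ` of `θ`. -/
def IsAngleResolved (L τ θ : ℝ) : Prop :=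
  ∀ φ ∈ Icc 0 π, L * |Real.cos θ - Real.cos φ| ≤ 2 → |θ - φ| ≤ τ

variable {L θ φ : ℝ}

lemma abs_cos_sub_cos (θ φ : ℝ) :
    |Real.cos θ - Real.cos φ| = 2 * |Real.sin ((θ + φ) / 2)| * |Real.sin ((θ - φ) / 2)| := by
  simp only [Real.cos_sub_cos, abs_mul, abs_neg, Nat.abs_ofNat]

lemma abs_sub_div_pi_le_abs_sin_half (hθ : θ ∈ Icc 0 π) (hφ : φ ∈ Icc 0 π) :
    |θ - φ| / π ≤ |Real.sin ((θ - φ) / 2)| := by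
  have hhalf : |(θ - φ) / 2| = |θ - φ| / 2 := by simp [abs_div]
  have hle : |θ - φ| ≤ π := by
    simpa using abs_sub_le_of_le_of_le hθ.1 hθ.2 hφ.1 hφ.2
  calc |θ - φ| / π = 2 / π * |(θ - φ) / 2| := by rw [hhalf]; ring
    _ ≤ |Real.sin ((θ - φ) / 2)| := Real.mul_abs_le_abs_sin (by linarith)

lemma sin_div_two_le_sin_midpoint (hθ : θ ∈ Icc 0 π) (hφ : φ ∈ Icc 0 π) :
    Real.sin θ / 2 ≤ Real.sin ((θ + φ) / 2) := by
  have hconcave := strictConcaveOn_sin_Icc.concaveOn.2 hθ hφ one_half_pos.le one_half_pos.le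
    (add_halves (1 : ℝ))
  have hsinφ := Real.sin_nonneg_of_mem_Icc hφ
  simp only [smul_eq_mul] at hconcave
  rw [show (θ + φ) / 2 = 1 / 2 * θ + 1 / 2 * φ by ring]
  linarith

lemma sin_mul_abs_sub_le (hθ : θ ∈ Icc 0 π) (hφ : φ ∈ Icc 0 π) :
    Real.sin θ * |θ - φ| ≤ π * |Real.cos θ - Real.cos φ| := by
  have hmid := (sin_div_two_le_sin_midpoint hθ hφ).trans (le_abs_self _)
  have hhalf := abs_sub_div_pi_le_abs_sin_half hθ hφ
  calc Real.sin θ * |θ - φ| = π * (2 * (Real.sin θ / 2) * (|θ - φ| / π)) := by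
        field_simp
    _ ≤ π * (2 * |Real.sin ((θ + φ) / 2)| * |Real.sin ((θ - φ) / 2)|) := by gcongr
    _ = π * |Real.cos θ - Real.cos φ| := by rw [abs_cos_sub_cos]

lemma abs_sin_half_sub_le (hθ : θ ∈ Icc 0 π) (hφ : φ ∈ Icc 0 π) :
    |Real.sin ((θ - φ) / 2)| ≤ |Real.sin ((θ + φ) / 2)| := by
  rw [← sq_le_sq, ← sub_nonneg]
  have hprod : Real.sin ((θ + φ) / 2) ^ 2 - Real.sin ((θ - φ) / 2) ^ 2 =
      Real.sin θ * Real.sin φ := by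
    have hsum := Real.sin_add ((θ + φ) / 2) ((θ - φ) / 2)
    have hdiff := Real.sin_sub ((θ + φ) / 2) ((θ - φ) / 2)
    rw [show (θ + φ) / 2 + (θ - φ) / 2 = θ by ring] at hsum
    rw [show (θ + φ) / 2 - (θ - φ) / 2 = φ by ring] at hdiff
    rw [hsum, hdiff]
    linear_combination Real.sin ((θ - φ) / 2) ^ 2 * Real.sin_sq_add_cos_sq ((θ + φ) / 2) -
      Real.sin ((θ + φ) / 2) ^ 2 * Real.sin_sq_add_cos_sq ((θ - φ) / 2)
  rw [hprod]
  exact mul_nonneg (Real.sin_nonneg_of_mem_Icc hθ) (Real.sin_nonneg_of_mem_Icc hφ)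

lemma two_mul_sq_abs_sub_le (hθ : θ ∈ Icc 0 π) (hφ : φ ∈ Icc 0 π) :
    2 * (|θ - φ| / π) ^ 2 ≤ |Real.cos θ - Real.cos φ| := by
  have hhalf := abs_sub_div_pi_le_abs_sin_half hθ hφ
  rw [abs_cos_sub_cos, mul_assoc, sq]
  gcongr
  exact hhalf.trans (abs_sin_half_sub_le hθ hφ)

lemma isAngleResolved_pi_div_sqrt (hL : 0 < L) (hθ : θ ∈ Icc 0 π) :
    IsAngleResolved L (π / √L) θ := by
  intro φ hφ hclose
  have hpi := Real.pi_pos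
  have hsq : (|θ - φ| / π) ^ 2 ≤ 1 / L := by
    rw [le_div_iff₀ hL]
    nlinarith [two_mul_sq_abs_sub_le hθ hφ]
  have hroot := Real.le_sqrt_of_sq_le hsq
  rw [div_le_iff₀ hpi, Real.sqrt_div zero_le_one, Real.sqrt_one] at hroot
  exact hroot.trans_eq (by ring)

lemma two_div_pi_mul_le_sin {δ : ℝ} (hδ : 0 ≤ δ) (hθ : θ ∈ Icc δ (π - δ)) :
    2 / π * δ ≤ Real.sin θ := by
  rcases le_total θ (π / 2) with h | h
  · exact le_trans (by gcongr; exact hθ.1) (Real.mul_le_sin (hδ.trans hθ.1) h)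
  · rw [← Real.sin_pi_sub]
    exact le_trans (by gcongr; linarith [hθ.2])
      (Real.mul_le_sin (by linarith [hθ.2]) (by linarith))

lemma isAngleResolved_of_mem_Icc {δ : ℝ} (hL : 0 < L) (hδ : 0 < δ)
    (hθ : θ ∈ Icc δ (π - δ)) : IsAngleResolved L (π ^ 2 / (L * δ)) θ := by
  intro φ hφ hclose
  have hθ' : θ ∈ Icc 0 π := Icc_subset_Icc hδ.le (sub_le_self _ hδ.le) hθ
  have hsin := two_div_pi_mul_le_sin hδ.le hθ
  rw [le_div_iff₀ (by positivity)]
  calc |θ - φ| * (L * δ) = L * π / 2 * (2 / π * δ * |θ - φ|) := by field_simp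
    _ ≤ L * π / 2 * (Real.sin θ * |θ - φ|) := by gcongr
    _ ≤ L * π / 2 * (π * |Real.cos θ - Real.cos φ|) :=
        mul_le_mul_of_nonneg_left (sin_mul_abs_sub_le hθ' hφ) (by positivity)
    _ = π ^ 2 / 2 * (L * |Real.cos θ - Real.cos φ|) := by ring
    _ ≤ π ^ 2 / 2 * 2 := by gcongr
    _ = π ^ 2 := by ring

end Angles

section Arc

/-- The point of `[a, a + L]` lying below the angle `θ` on the semicircle over this interval,
traversed from `a` (`θ = 0`) to `a + L` (`θ = π`). -/
noncomputable def arcPoint (a L θ : ℝ) : ℝ := a + L / 2 * (1 - Real.cos θ)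

/-- The polynomial `q` transported from `[a, a + L]` to `[-1, 1]`, reversing the orientation so that
the value at `cos θ` is that of `q` at `arcPoint a L θ`. -/
noncomputable def arcPullback (q : ℝ[X]) (a L : ℝ) : ℝ[X] := q.comp (C a + C (L / 2) * (1 - X))

variable {q : ℝ[X]} {a L : ℝ}

lemma eval_cos_arcPullback (θ : ℝ) :
    (arcPullback q a L).eval (Real.cos θ) = q.eval (arcPoint a L θ) := by
  simp [arcPullback, arcPoint]

lemma natDegree_arcPullback_le : (arcPullback q a L).natDegree ≤ q.natDegree := by
  refine natDegree_comp_le.trans (mul_le_of_le_one_right (Nat.zero_le _) ?_)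
  compute_degree

lemma arcPoint_mem_Icc (hL : 0 ≤ L) (θ : ℝ) : arcPoint a L θ ∈ Icc a (a + L) := by
  rw [arcPoint]
  constructor <;> nlinarith [Real.cos_le_one θ, Real.neg_one_le_cos θ]

lemma exists_arcPoint_eq {y : ℝ} (hy : y ∈ Icc a (a + L)) :
    ∃ φ ∈ Icc 0 π, arcPoint a L φ = y := by
  have hcont : ContinuousOn (arcPoint a L) (Icc 0 π) := by unfold arcPoint; fun_prop
  have hleft : arcPoint a L 0 = a := by simp [arcPoint]
  have hright : arcPoint a L π = a + L := by simp only [arcPoint, Real.cos_pi]; ring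
  exact intermediate_value_Icc Real.pi_nonneg hcont (by rwa [hleft, hright])

lemma IsAngleResolved.abs_sub_le {θ φ τ : ℝ} (h : IsAngleResolved L τ θ) (hL : 0 ≤ L)
    (hφ : φ ∈ Icc 0 π) (hdist : |arcPoint a L φ - arcPoint a L θ| ≤ 1) : |θ - φ| ≤ τ := by
  refine h φ hφ ?_
  have hpoint : arcPoint a L φ - arcPoint a L θ = L / 2 * (Real.cos θ - Real.cos φ) := by
    simp only [arcPoint]; ring
  rw [hpoint, abs_mul, abs_of_nonneg (by positivity)] at hdist
  linarith

end Arc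

section Oscillation

variable {Q W : ℝ[X]} {N : ℕ} {M c η τ : ℝ}

lemma abs_eval_cos_mul_le_add (hN : 0 < N) (hdeg : (Q * W).natDegree ≤ N)
    (hM : ∀ x : ℝ, |(Q * W).eval (Real.cos x)| ≤ M)
    (hW : ∀ x : ℝ, |W.eval (Real.cos x)| ≤ 1) {θ φ : ℝ} (hclose : |θ - φ| ≤ τ)
    (hφ : |Q.eval (Real.cos φ)| ≤ c) :
    |(Q * W).eval (Real.cos θ)| ≤ c + Real.exp 1 * N * τ * M := by
  have hM0 : 0 ≤ M := (abs_nonneg _).trans (hM 0)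
  have hQW : |(Q * W).eval (Real.cos φ)| ≤ c := by
    rw [eval_mul, abs_mul]
    exact (mul_le_of_le_one_right (abs_nonneg _) (hW φ)).trans hφ
  calc |(Q * W).eval (Real.cos θ)|
      ≤ |(Q * W).eval (Real.cos φ)| +
          |(Q * W).eval (Real.cos θ) - (Q * W).eval (Real.cos φ)| := by
        linarith [abs_sub_abs_le_abs_sub ((Q * W).eval (Real.cos θ)) ((Q * W).eval (Real.cos φ))]
    _ ≤ c + Real.exp 1 * N * M * τ := by
        gcongr
        exact (abs_eval_cos_sub_le hN hdeg hM θ φ).trans (by gcongr)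
    _ = c + Real.exp 1 * N * τ * M := by ring

lemma abs_eval_cos_sub_le_of_eval_eq_one (hN : 0 < N) (hdeg : (Q * W).natDegree ≤ N)
    (hM : ∀ x : ℝ, |(Q * W).eval (Real.cos x)| ≤ M) (hWdeg : W.natDegree ≤ N)
    (hW : ∀ x : ℝ, |W.eval (Real.cos x)| ≤ 1) {θ₀ θ₁ : ℝ} (hθ₀ : W.eval (Real.cos θ₀) = 1)
    (hclose : |θ₀ - θ₁| ≤ τ) (hθ₁ : |Q.eval (Real.cos θ₁)| ≤ c) :
    |Q.eval (Real.cos θ₁) - Q.eval (Real.cos θ₀)| ≤ Real.exp 1 * N * τ * (c + M) := by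
  have hc0 : 0 ≤ c := (abs_nonneg _).trans hθ₁
  have hM0 : 0 ≤ M := (abs_nonneg _).trans (hM 0)
  have hQW := (abs_eval_cos_sub_le hN hdeg hM θ₀ θ₁).trans
    (show _ ≤ Real.exp 1 * N * M * τ by gcongr)
  have hW_sub := (abs_eval_cos_sub_le hN hWdeg hW θ₀ θ₁).trans
    (show _ ≤ Real.exp 1 * N * 1 * τ by gcongr)
  have hsplit : Q.eval (Real.cos θ₁) - Q.eval (Real.cos θ₀) =
      Q.eval (Real.cos θ₁) * (W.eval (Real.cos θ₀) - W.eval (Real.cos θ₁)) -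
        ((Q * W).eval (Real.cos θ₀) - (Q * W).eval (Real.cos θ₁)) := by
    simp only [eval_mul, hθ₀]
    ring
  rw [hsplit]
  refine (abs_sub _ _).trans ?_
  rw [abs_mul]
  calc _ ≤ c * (Real.exp 1 * N * 1 * τ) + Real.exp 1 * N * M * τ := by gcongr
    _ = Real.exp 1 * N * τ * (c + M) := by ring

lemma le_exp_one_mul_of_le_abs_eval_cos_sub (hN : 0 < N) (hdeg : (Q * W).natDegree ≤ N)
    (hWdeg : W.natDegree ≤ N) (hW : ∀ x : ℝ, |W.eval (Real.cos x)| ≤ 1) {θ₀ θ₁ : ℝ}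
    (hθ₀ : W.eval (Real.cos θ₀) = 1) (hclose : |θ₀ - θ₁| ≤ τ) (hc : 0 < c)
    (hθ₁ : |Q.eval (Real.cos θ₁)| ≤ c)
    (hmax : ∀ θ ∈ Icc 0 π, 0 < |(Q * W).eval (Real.cos θ)| →
      (∀ x : ℝ, |(Q * W).eval (Real.cos x)| ≤ |(Q * W).eval (Real.cos θ)|) →
      ∃ φ, |θ - φ| ≤ τ ∧ |Q.eval (Real.cos φ)| ≤ c)
    (hη : η ≤ 1 / 2) (hosc : 3 * c * η ≤ |Q.eval (Real.cos θ₁) - Q.eval (Real.cos θ₀)|) :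
    η ≤ Real.exp 1 * N * τ := by
  obtain ⟨θ, hθ, hM⟩ := exists_forall_abs_eval_cos_le (Q * W)
  have hτ : 0 ≤ τ := (abs_nonneg _).trans hclose
  set M := |(Q * W).eval (Real.cos θ)| with hM_def
  set Λ := Real.exp 1 * N * τ
  have hΛ0 : 0 ≤ Λ := by positivity
  have hM_le : M ≤ c + Λ * M := by
    rcases (abs_nonneg ((Q * W).eval (Real.cos θ))).eq_or_lt' with hzero | hpos
    · simpa [hM_def.trans hzero] using hc.le
    · obtain ⟨φ, hθφ, hφ⟩ := hmax θ hθ hpos hM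
      exact abs_eval_cos_mul_le_add hN hdeg hM hW hθφ hφ
  have hosc_le : 3 * c * η ≤ Λ * (c + M) :=
    hosc.trans (abs_eval_cos_sub_le_of_eval_eq_one hN hdeg hM hWdeg hW hθ₀ hclose hθ₁)
  by_contra! hlt
  have hM_le_two : M ≤ 2 * c := by nlinarith [abs_nonneg ((Q * W).eval (Real.cos θ))]
  nlinarith

end Oscillation

section Jump

variable {q : ℝ[X]} {I J : Set ℝ} {a m : ℤ} {b ξ L c η τ : ℝ}

/-- `q` is bounded by `c` at the integers of `I`, but its values at `ξ` and at the integer `m`, at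
most one apart in `I`, differ by at least `3 * c * η`. The factor `3` and the bound on `η` are those
of `le_exp_one_mul_of_le_abs_eval_cos_sub`. -/
structure HasJump (q : ℝ[X]) (I : Set ℝ) (m : ℤ) (ξ c η : ℝ) : Prop where
  abs_eval_le (i : ℤ) (hi : (i : ℝ) ∈ I) : |q.eval (i : ℝ)| ≤ c
  bound_pos : 0 < c
  int_mem : (m : ℝ) ∈ I
  mem : ξ ∈ I
  abs_sub_le_one : |(m : ℝ) - ξ| ≤ 1
  le_half : η ≤ 1 / 2
  le_abs_sub : 3 * c * η ≤ |q.eval (m : ℝ) - q.eval ξ|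

lemma floor_mem_Icc {y : ℝ} (hy : y ∈ Icc (a : ℝ) b) : (⌊y⌋ : ℝ) ∈ Icc (a : ℝ) b :=
  ⟨Int.cast_le.2 (Int.le_floor.2 hy.1), (Int.floor_le y).trans hy.2⟩

lemma abs_floor_sub_le_one (y : ℝ) : |(⌊y⌋ : ℝ) - y| ≤ 1 := by
  rw [abs_sub_comm, Int.self_sub_floor, Int.abs_fract]
  exact (Int.fract_lt_one y).le

lemma IsAngleResolved.exists_abs_sub_le {θ y : ℝ} (h : IsAngleResolved L τ θ)
    (hy : y ∈ Icc (a : ℝ) (a + L)) (hdist : |y - arcPoint a L θ| ≤ 1) :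
    ∃ φ, |θ - φ| ≤ τ ∧ arcPoint a L φ = y := by
  obtain ⟨φ, hφ, rfl⟩ := exists_arcPoint_eq hy
  have hL : 0 ≤ L := le_add_iff_nonneg_right _ |>.1 (hy.1.trans hy.2)
  exact ⟨φ, h.abs_sub_le hL hφ hdist, rfl⟩

namespace HasJump

lemma mono (h : HasJump q J m ξ c η) (hIJ : I ⊆ J) (hm : (m : ℝ) ∈ I) (hξ : ξ ∈ I) :
    HasJump q I m ξ c η :=
  { h with abs_eval_le := fun i hi ↦ h.abs_eval_le i (hIJ hi), int_mem := hm, mem := hξ }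

lemma comp_neg (h : HasJump q I m ξ c η) : HasJump (q.comp (-X)) (-I) (-m) (-ξ) c η where
  abs_eval_le i hi := by simpa using h.abs_eval_le (-i) (by simpa using hi)
  bound_pos := h.bound_pos
  int_mem := by simpa using h.int_mem
  mem := by simpa using h.mem
  abs_sub_le_one := by
    rw [Int.cast_neg, neg_sub_neg, abs_sub_comm]
    exact h.abs_sub_le_one
  le_half := h.le_half
  le_abs_sub := by simpa using h.le_abs_sub

lemma eval_ne (h : HasJump q I m ξ c η) (hη : 0 < η) : q.eval (m : ℝ) ≠ q.eval ξ := by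
  have hc := h.bound_pos
  exact sub_ne_zero.1 (abs_pos.1 (lt_of_lt_of_le (by positivity) h.le_abs_sub))

lemma natDegree_pos (h : HasJump q I m ξ c η) (hη : 0 < η) : 0 < q.natDegree := by
  refine Nat.pos_of_ne_zero fun hzero ↦ h.eval_ne hη ?_
  rw [eq_C_of_natDegree_eq_zero hzero, eval_C, eval_C]

lemma left_lt_right (h : HasJump q (Icc a b) m ξ c η) (hη : 0 < η) : (a : ℝ) < b := by
  by_contra! hle
  refine h.eval_ne hη (congrArg (fun x ↦ q.eval x) (le_antisymm ?_ ?_))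
  · exact (h.int_mem.2.trans hle).trans h.mem.1
  · exact (h.mem.2.trans hle).trans h.int_mem.1

lemma le_exp_one_mul_of_isAngleResolved {W : ℝ[X]} {N : ℕ} {θ₀ : ℝ}
    (h : HasJump q (Icc a (a + L)) m (arcPoint a L θ₀) c η)
    (hN : 0 < N) (hdeg : (arcPullback q a L * W).natDegree ≤ N)
    (hWdeg : W.natDegree ≤ N) (hW : ∀ x : ℝ, |W.eval (Real.cos x)| ≤ 1)
    (hθ₀ : W.eval (Real.cos θ₀) = 1) (hres₀ : IsAngleResolved L τ θ₀)
    (hres : ∀ θ ∈ Icc 0 π, 0 < |(arcPullback q a L * W).eval (Real.cos θ)| →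
      (∀ x : ℝ, |(arcPullback q a L * W).eval (Real.cos x)| ≤
        |(arcPullback q a L * W).eval (Real.cos θ)|) → IsAngleResolved L τ θ) :
    η ≤ Real.exp 1 * N * τ := by
  have hL : 0 ≤ L := le_add_iff_nonneg_right _ |>.1 (h.mem.1.trans h.mem.2)
  obtain ⟨θ₁, hclose, hpoint⟩ := hres₀.exists_abs_sub_le h.int_mem h.abs_sub_le_one
  refine le_exp_one_mul_of_le_abs_eval_cos_sub hN hdeg hWdeg hW hθ₀ hclose h.bound_pos ?_
    (fun θ hθ hpos hmax ↦ ?_) h.le_half ?_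
  · rw [eval_cos_arcPullback, hpoint]
    exact h.abs_eval_le m h.int_mem
  · have hfloor := floor_mem_Icc (arcPoint_mem_Icc (a := a) hL θ)
    obtain ⟨φ, hθφ, hφ⟩ := (hres θ hθ hpos hmax).exists_abs_sub_le hfloor
      (abs_floor_sub_le_one _)
    refine ⟨φ, hθφ, ?_⟩
    rw [eval_cos_arcPullback, hφ]
    exact h.abs_eval_le _ hfloor
  · simpa only [eval_cos_arcPullback, hpoint] using h.le_abs_sub

lemma mul_sqrt_sub_le_natDegree (h : HasJump q (Icc a b) m ξ c η) (hη : 0 < η) :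
    η * √(b - a) ≤ Real.exp 1 * π * q.natDegree := by
  have hL : 0 < b - a := sub_pos.2 (h.left_lt_right hη)
  set L := b - a with hL_def
  rw [← add_sub_cancel (a : ℝ) b, ← hL_def] at h
  obtain ⟨θ₀, hθ₀, rfl⟩ := exists_arcPoint_eq h.mem
  have hle : η ≤ Real.exp 1 * q.natDegree * (π / √L) :=
    h.le_exp_one_mul_of_isAngleResolved (W := 1) (h.natDegree_pos hη)
      (by simpa only [mul_one] using natDegree_arcPullback_le) (by simp) (by simp) (by simp)
      (isAngleResolved_pi_div_sqrt hL hθ₀) (fun θ hθ _ _ ↦ isAngleResolved_pi_div_sqrt hL hθ)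
  rw [← le_div_iff₀ (Real.sqrt_pos.2 hL)]
  exact hle.trans_eq (by ring)

lemma mul_le_of_natDegree_le {p r : ℕ}
    (h : HasJump q (Icc a (a + L)) m (arcPoint a L (π / (2 * p))) c η) (hL : 0 < L)
    (hp : p ≠ 0) (hr : r ≠ 0) (hdeg : q.natDegree ≤ 2 * p * r) :
    η * L ≤ 8 * (Real.exp 1 * π) ^ 2 * p ^ 2 * r := by
  have hN : (arcPullback q a L * chebyshevWeight p r).natDegree ≤ 4 * p * r := calc
    _ ≤ (arcPullback q a L).natDegree + (chebyshevWeight p r).natDegree := natDegree_mul_le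
    _ ≤ 2 * p * r + 2 * p * r := by
        gcongr
        · exact natDegree_arcPullback_le.trans hdeg
        · exact natDegree_chebyshevWeight_le
    _ = 4 * p * r := by ring
  have hWdeg : (chebyshevWeight p r).natDegree ≤ 4 * p * r :=
    natDegree_chebyshevWeight_le.trans (by gcongr; norm_num)
  set δ := 1 / (2 * Real.exp 1 * p) with hδ
  have hδ_pos : 0 < δ := by positivity
  have hle : η ≤ Real.exp 1 * (4 * p * r : ℕ) * (π ^ 2 / (L * δ)) :=
    h.le_exp_one_mul_of_isAngleResolved (by positivity) hN hWdeg
      abs_eval_cos_chebyshevWeight_le_one (eval_cos_chebyshevWeight_eq_one hp)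
      (isAngleResolved_of_mem_Icc hL hδ_pos (pi_div_two_mul_mem_Icc hp))
      (fun θ hθ hpos hmax ↦ isAngleResolved_of_mem_Icc hL hδ_pos
        (mem_Icc_of_abs_eval_mul_chebyshevWeight_eq hp hr hN hpos hθ hmax rfl))
  rw [← le_div_iff₀ hL]
  refine hle.trans_eq ?_
  rw [hδ]
  push_cast
  field_simp
  ring

lemma mul_le_natDegree_add {p : ℕ}
    (h : HasJump q (Icc a (a + L)) m (arcPoint a L (π / (2 * p))) c η) (hL : 0 < L)
    (hp : p ≠ 0) :
    η * L ≤ 4 * (Real.exp 1 * π) ^ 2 * p * (q.natDegree + 2 * p) := by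
  set r := q.natDegree / (2 * p) + 1 with hr
  have hdeg : q.natDegree ≤ 2 * p * r := (Nat.lt_mul_div_succ _ (by positivity)).le
  have hr_le : (2 * p * r : ℝ) ≤ q.natDegree + 2 * p := by
    norm_cast
    rw [hr, mul_add_one]
    gcongr
    exact Nat.mul_div_le _ _
  calc η * L ≤ 8 * (Real.exp 1 * π) ^ 2 * p ^ 2 * r :=
        h.mul_le_of_natDegree_le hL hp (Nat.succ_ne_zero _) hdeg
    _ = 4 * (Real.exp 1 * π) ^ 2 * p * (2 * p * r) := by ring
    _ ≤ 4 * (Real.exp 1 * π) ^ 2 * p * (q.natDegree + 2 * p) := by gcongr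

end HasJump
end Jump

section PeakLength

/-- The length `L` of the interval `[a, a + L]` for which the peak `π / (2 p)` of
`chebyshevWeight p r` is the angle of the point at distance `k` from `a`. -/
noncomputable def peakLength (k : ℝ) (p : ℕ) : ℝ := 2 * k / (1 - Real.cos (π / (2 * p)))

variable {k : ℝ} {p : ℕ}

lemma cos_pi_div_two_mul_lt_one (hp : p ≠ 0) : Real.cos (π / (2 * p)) < 1 := by
  have hpos : 0 < π / (2 * p) := by positivity
  simpa using Real.cos_lt_cos_of_nonneg_of_le_pi_div_two le_rfl (pi_div_two_mul_le hp) hpos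

lemma arcPoint_peakLength (a k : ℝ) (hp : p ≠ 0) :
    arcPoint a (peakLength k p) (π / (2 * p)) = a + k := by
  have hne : 1 - Real.cos (π / (2 * p)) ≠ 0 := (sub_pos.2 (cos_pi_div_two_mul_lt_one hp)).ne'
  rw [arcPoint, peakLength]
  field_simp

lemma peakLength_one (k : ℝ) : peakLength k 1 = 2 * k := by
  simp [peakLength]

lemma two_mul_le_peakLength (hk : 0 ≤ k) (hp : p ≠ 0) : 2 * k ≤ peakLength k p := by
  have hcos : 0 ≤ Real.cos (π / (2 * p)) :=
    Real.cos_nonneg_of_neg_pi_div_two_le_of_le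
      ((neg_nonpos.2 Real.pi_div_two_pos.le).trans (by positivity)) (pi_div_two_mul_le hp)
  exact le_div_self (by positivity) (sub_pos.2 (cos_pi_div_two_mul_lt_one hp)) (by linarith)

lemma sq_mul_le_peakLength (hk : 0 ≤ k) (hp : p ≠ 0) : p ^ 2 * k ≤ peakLength k p := by
  have hcos := Real.one_sub_sq_div_two_le_cos (x := π / (2 * p))
  have hpi : π ^ 2 ≤ 4 ^ 2 := by gcongr; exact Real.pi_le_four
  rw [peakLength, le_div_iff₀ (sub_pos.2 (cos_pi_div_two_mul_lt_one hp))]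
  calc p ^ 2 * k * (1 - Real.cos (π / (2 * p)))
      ≤ p ^ 2 * k * ((π / (2 * p)) ^ 2 / 2) := by gcongr; linarith
    _ = π ^ 2 / 8 * k := by field_simp; norm_num
    _ ≤ 2 * k := by gcongr; linarith

lemma peakLength_succ_le (hk : 0 ≤ k) (hp : p ≠ 0) :
    peakLength k (p + 1) ≤ 4 * peakLength k p := by
  have hp1 : (1 : ℝ) ≤ p := Nat.one_le_cast.2 (Nat.one_le_iff_ne_zero.2 hp)
  set y := π / (2 * (p + 1 : ℕ)) with hy
  have hdouble : π / (2 * p) ≤ 2 * y := by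
    rw [hy, ← mul_div_assoc, div_le_div_iff₀ (by positivity) (by positivity)]
    push_cast
    nlinarith [Real.pi_pos]
  have htwo_y : 2 * y ≤ π := by
    linarith [pi_div_two_mul_le (p := p + 1) p.succ_ne_zero]
  have hcos : Real.cos (2 * y) ≤ Real.cos (π / (2 * p)) :=
    Real.cos_le_cos_of_nonneg_of_le_pi (by positivity) htwo_y hdouble
  have hquad : 1 - Real.cos (π / (2 * p)) ≤ 4 * (1 - Real.cos y) := by
    rw [Real.cos_two_mul] at hcos
    nlinarith [sq_nonneg (1 - Real.cos y)]
  have hpos := sub_pos.2 (cos_pi_div_two_mul_lt_one hp)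
  calc peakLength k (p + 1) = 4 * (2 * k) / (4 * (1 - Real.cos y)) := by
        rw [mul_div_mul_left _ _ four_ne_zero, peakLength]
    _ ≤ 4 * (2 * k) / (1 - Real.cos (π / (2 * p))) := by gcongr
    _ = 4 * peakLength k p := by rw [peakLength, mul_div_assoc]

lemma exists_peakLength_le_lt {n : ℝ} (hk : 0 < k) (hn : 2 * k ≤ n) :
    ∃ p ≠ 0, peakLength k p ≤ n ∧ n < 4 * peakLength k p := by
  by_contra! hstep
  have hle : ∀ p ≥ 1, peakLength k p ≤ n := by
    refine Nat.le_induction (by rwa [peakLength_one]) fun p hp ih ↦ ?_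
    have hp0 : p ≠ 0 := Nat.one_le_iff_ne_zero.1 hp
    exact (peakLength_succ_le hk.le hp0).trans (hstep p hp0 ih)
  obtain ⟨p, hp⟩ := exists_nat_gt (n / k)
  rw [div_lt_iff₀ hk] at hp
  have hp0 : p ≠ 0 := by
    rintro rfl
    norm_num at hp
    linarith
  have hsq := (sq_mul_le_peakLength hk.le hp0).trans (hle p (Nat.one_le_iff_ne_zero.2 hp0))
  nlinarith

end PeakLength

section Interval

variable {q : ℝ[X]} {a b m : ℤ} {ξ c η : ℝ}

lemma one_le_exp_one_mul_pi : 1 ≤ Real.exp 1 * π :=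
  one_le_mul_of_one_le_of_one_le (Real.one_le_exp zero_le_one) (by linarith [Real.pi_gt_three])

lemma sqrt_le_two_mul_sqrt_of_le_one {k n : ℝ} (hk0 : 0 ≤ k) (hk : k ≤ 1) (hn : 1 ≤ n) :
    √((k + 1) * (n - k + 1)) ≤ 2 * √n := by
  have hsq : (k + 1) * (n - k + 1) ≤ 2 ^ 2 * n := by nlinarith
  calc √((k + 1) * (n - k + 1)) ≤ √(2 ^ 2 * n) := Real.sqrt_le_sqrt hsq
    _ = 2 * √n := by rw [Real.sqrt_mul (by positivity), Real.sqrt_sq zero_le_two]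

lemma sqrt_le_three_mul_sqrt_mul_sqrt {k n L : ℝ} (hk : 1 ≤ k) (hkn : 2 * k ≤ n)
    (hn : n ≤ 4 * L) : √((k + 1) * (n - k + 1)) ≤ 3 * (√k * √L) := by
  have hsq : (k + 1) * (n - k + 1) ≤ 3 ^ 2 * (k * L) := by nlinarith
  calc √((k + 1) * (n - k + 1)) ≤ √(3 ^ 2 * (k * L)) := Real.sqrt_le_sqrt hsq
    _ = 3 * (√k * √L) := by
        rw [Real.sqrt_mul (by positivity), Real.sqrt_sq zero_le_three, Real.sqrt_mul (by linarith)]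

lemma sq_mul_sqrt_mul_sqrt_le {k n L η A d : ℝ} {p : ℕ} (hp : p ≠ 0) (hk : 1 ≤ k) (hA : 1 ≤ A)
    (hd : 0 ≤ d) (hη0 : 0 ≤ η) (hη : η ≤ 1 / 2) (hpL : p ^ 2 * k ≤ L) (hLn : L ≤ n)
    (hwhole : η * √n ≤ A * d) (hpeak : η * L ≤ 4 * A ^ 2 * p * (d + 2 * p)) :
    η ^ 2 * (√k * √L) ≤ 12 * A ^ 3 * d := by
  have hLpos : 0 < L := lt_of_lt_of_le (by positivity) hpL
  have hroot : p * √k ≤ √L := by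
    simpa [Real.sqrt_mul] using Real.sqrt_le_sqrt hpL
  have hηp : η * p ≤ A * d := calc
    η * p ≤ η * (p * √k) := by gcongr; exact le_mul_of_one_le_right (by positivity) (by simpa)
    _ ≤ η * √n := by gcongr; exact hroot.trans (Real.sqrt_le_sqrt hLn)
    _ ≤ A * d := hwhole
  have hηd : η * d ≤ A * d := by gcongr; linarith
  have hηL : η ^ 2 * L ≤ 12 * A ^ 3 * d * p := calc
    η ^ 2 * L = η * (η * L) := by ring
    _ ≤ η * (4 * A ^ 2 * p * (d + 2 * p)) := by gcongr
    _ = 4 * A ^ 2 * p * (η * d + 2 * (η * p)) := by ring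
    _ ≤ 4 * A ^ 2 * p * (A * d + 2 * (A * d)) := by gcongr
    _ = 12 * A ^ 3 * d * p := by ring
  refine le_of_mul_le_mul_right ?_ (Real.sqrt_pos.2 hLpos)
  calc η ^ 2 * (√k * √L) * √L = η ^ 2 * (√L * √L) * √k := by ring
    _ = η ^ 2 * L * √k := by rw [Real.mul_self_sqrt hLpos.le]
    _ ≤ 12 * A ^ 3 * d * p * √k := by gcongr
    _ = 12 * A ^ 3 * d * (p * √k) := by ring
    _ ≤ 12 * A ^ 3 * d * √L := by gcongr

namespace HasJump

lemma sq_mul_sqrt_le_natDegree_of_sub_le_one (h : HasJump q (Icc a b) m ξ c η) (hη : 0 < η)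
    (hξ : ξ - a ≤ 1) :
    η ^ 2 * √((ξ - a + 1) * (b - ξ + 1)) ≤ Real.exp 1 * π * q.natDegree := by
  have hlen : (1 : ℝ) ≤ b - a := by rw [le_sub_iff_add_le']; exact_mod_cast h.left_lt_right hη
  have hroot := sqrt_le_two_mul_sqrt_of_le_one (sub_nonneg.2 h.mem.1) hξ hlen
  rw [sub_sub_sub_cancel_right] at hroot
  calc η ^ 2 * √((ξ - a + 1) * (b - ξ + 1)) ≤ η ^ 2 * (2 * √(b - a)) := by gcongr
    _ = 2 * η * (η * √(b - a)) := by ring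
    _ ≤ 1 * (Real.exp 1 * π * q.natDegree) :=
        mul_le_mul (by linarith [h.le_half]) (h.mul_sqrt_sub_le_natDegree hη)
          (by positivity) zero_le_one
    _ = Real.exp 1 * π * q.natDegree := one_mul _

lemma sq_mul_sqrt_le_natDegree_of_one_le_sub (h : HasJump q (Icc a b) m ξ c η) (hη : 0 < η)
    (hξ : 1 ≤ ξ - a) (hleft : ξ - a ≤ b - ξ) :
    η ^ 2 * √((ξ - a + 1) * (b - ξ + 1)) ≤
      36 * (Real.exp 1 * π) ^ 3 * q.natDegree := by
  set k := ξ - a with hk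
  have hk0 : 0 < k := by linarith
  have hlen : 2 * k ≤ b - a := by linarith
  obtain ⟨p, hp, hL_le, hlt_L⟩ := exists_peakLength_le_lt hk0 hlen
  set L := peakLength k p with hL
  have hkL : 2 * k ≤ L := two_mul_le_peakLength hk0.le hp
  have hpoint : arcPoint a L (π / (2 * p)) = ξ := by
    rw [hL, arcPoint_peakLength _ _ hp, hk, add_sub_cancel]
  have hm_le : (m : ℝ) ≤ a + L := by linarith [(abs_le.1 h.abs_sub_le_one).2]
  have hrestrict : HasJump q (Icc a (a + L)) m ξ c η :=
    h.mono (Icc_subset_Icc_right (by linarith)) ⟨h.int_mem.1, hm_le⟩ ⟨h.mem.1, by linarith⟩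
  have hpeak : η * L ≤ 4 * (Real.exp 1 * π) ^ 2 * p * (q.natDegree + 2 * p) :=
    HasJump.mul_le_natDegree_add (by rwa [hpoint]) (by linarith) hp
  have hgeom := sq_mul_sqrt_mul_sqrt_le hp hξ one_le_exp_one_mul_pi (Nat.cast_nonneg _) hη.le
    h.le_half (sq_mul_le_peakLength hk0.le hp) hL_le (h.mul_sqrt_sub_le_natDegree hη) hpeak
  have hroot := sqrt_le_three_mul_sqrt_mul_sqrt hξ hlen hlt_L.le
  rw [hk, sub_sub_sub_cancel_right, ← hk] at hroot
  calc η ^ 2 * √((k + 1) * (b - ξ + 1)) ≤ η ^ 2 * (3 * (√k * √L)) := by gcongr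
    _ = 3 * (η ^ 2 * (√k * √L)) := by ring
    _ ≤ 36 * (Real.exp 1 * π) ^ 3 * q.natDegree := by linarith

lemma sq_mul_sqrt_le_natDegree_of_sub_le_sub (h : HasJump q (Icc a b) m ξ c η) (hη : 0 < η)
    (hleft : ξ - a ≤ b - ξ) :
    η ^ 2 * √((ξ - a + 1) * (b - ξ + 1)) ≤
      36 * (Real.exp 1 * π) ^ 3 * q.natDegree := by
  rcases le_total (ξ - a) 1 with hnear | hfar
  · refine (h.sq_mul_sqrt_le_natDegree_of_sub_le_one hη hnear).trans ?_
    have hpow := le_self_pow₀ one_le_exp_one_mul_pi three_ne_zero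
    have hpow_nonneg : 0 ≤ (Real.exp 1 * π) ^ 3 := by positivity
    gcongr ?_ * _
    linarith
  · exact h.sq_mul_sqrt_le_natDegree_of_one_le_sub hη hfar hleft

lemma sq_mul_sqrt_le_natDegree (h : HasJump q (Icc a b) m ξ c η) (hη : 0 < η) :
    η ^ 2 * √((ξ - a + 1) * (b - ξ + 1)) ≤
      36 * (Real.exp 1 * π) ^ 3 * q.natDegree := by
  rcases le_total (ξ - a) (b - ξ) with hleft | hright
  · exact h.sq_mul_sqrt_le_natDegree_of_sub_le_sub hη hleft
  · have hneg : HasJump (q.comp (-X)) (Icc (-b : ℤ) (-a : ℤ)) (-m) (-ξ) c η := by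
      simpa using h.comp_neg
    have hreflect := hneg.sq_mul_sqrt_le_natDegree_of_sub_le_sub hη
      (by push_cast; linarith)
    have hswap : (-ξ - (-b : ℤ) + 1) * ((-a : ℤ) - -ξ + 1) = (ξ - a + 1) * (b - ξ + 1) := by
      push_cast
      ring
    simpa only [hswap, natDegree_comp, natDegree_neg, natDegree_X, mul_one] using hreflect

end HasJump
end Interval

/-- (Paturi) If `|q(i)| ≤ c₁` on all integers of `[a,b]` and
`|q(⌊ξ⌋) - q(ξ)| ≥ c₂` for some real `ξ ∈ [a,b]`, then
`deg q ≥ C √((ξ-a+1)(b-ξ+1))` for a constant `C > 0` depending only on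
`c₁, c₂`. -/
theorem stmt_12 (c₁ c₂ : ℝ) (hc₁ : 0 < c₁) (hc₂ : 0 < c₂) :
    ∃ C > 0, ∀ (q : Polynomial ℝ) (a b : ℤ) (ξ : ℝ), a < b →
      (a : ℝ) ≤ ξ → ξ ≤ (b : ℝ) →
      (∀ i : ℤ, a ≤ i → i ≤ b → |q.eval (i : ℝ)| ≤ c₁) →
      c₂ ≤ |q.eval ((⌊ξ⌋ : ℤ) : ℝ) - q.eval ξ| →
      C * Real.sqrt ((ξ - a + 1) * ((b : ℝ) - ξ + 1)) ≤ (q.natDegree : ℝ) := by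
  set η := min (1 / 2) (c₂ / (3 * c₁))
  have hη0 : 0 < η := by positivity
  have hη : 3 * c₁ * η ≤ c₂ := by
    rw [mul_comm, ← le_div_iff₀ (by positivity)]
    exact min_le_right _ _
  refine ⟨η ^ 2 / (36 * (Real.exp 1 * π) ^ 3), by positivity, ?_⟩
  intro q a b ξ _ haξ hξb hq hosc
  have hjump : HasJump q (Icc a b) ⌊ξ⌋ ξ c₁ η :=
    { abs_eval_le := fun i hi ↦ hq i (Int.cast_le.1 hi.1) (Int.cast_le.1 hi.2)
      bound_pos := hc₁
      int_mem := floor_mem_Icc ⟨haξ, hξb⟩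
      mem := ⟨haξ, hξb⟩
      abs_sub_le_one := abs_floor_sub_le_one ξ
      le_half := min_le_left _ _
      le_abs_sub := hη.trans hosc }
  rw [div_mul_eq_mul_div, div_le_iff₀' (by positivity)]
  exact hjump.sq_mul_sqrt_le_natDegree hη0
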